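/- Let G be a parity game and G_q its governed stuttering bisimulation quotient. If two vertices v, w of G are governed stuttering bisimilar, then v and w are won by the same player; i.e., governed stuttering bisimilarity refines winner equivalence. More precisely: if player i has a winning strategy from v and v ≈ w (governed stuttering bisimilar), then i has a winning strategy from w. -/

import Mathlib

universe u

/-- A parity game: a directed graph with a total edge relation, a priority
function and an owner function (`true` = player even, `false` = player odd). -/
structure ParityGame (V : Type u) where
  edge : V → V → Prop
  total : ∀ v, ∃ w, edge v w
  prio : V → ℕ
  owner : V → Bool

namespace ParityGame

variable {V : Type u}

/-- A (history-dependent) strategy: given the history of previously visited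
vertices and the current vertex, choose a successor.  Only the values at
vertices owned by the given player matter. -/
abbrev Strategy (V : Type u) : Type u := List V → V → V

variable (G : ParityGame V)

/-- A strategy is valid for player `i` if it always proposes edges. -/
def ValidStrategy (i : Bool) (σ : Strategy V) : Prop :=
  ∀ h v, G.owner v = i → G.edge v (σ h v)

/-- A memoryless strategy only depends on the current vertex. -/
def Memoryless (σ : Strategy V) : Prop := ∀ h h' v, σ h v = σ h' v

/-- An (infinite) play is an infinite path in the game graph. -/
def IsPlay (p : ℕ → V) : Prop := ∀ n, G.edge (p n) (p (n + 1))

/-- The history of a play before position `n`. -/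
def hist (p : ℕ → V) (n : ℕ) : List V := List.ofFn (fun k : Fin n => p k)

/-- A play is consistent with a strategy `σ` of player `i` if at every vertex
owned by `i` the play follows `σ`. -/
def Consistent (i : Bool) (σ : Strategy V) (p : ℕ → V) : Prop :=
  ∀ n, G.owner (p n) = i → p (n + 1) = σ (hist p n) (p n)

/-- `G.ForcesVia i σ v U T`: every play from `v` consistent with `σ` reaches
`T`, all earlier vertices lying in `U`. -/
def ForcesVia (i : Bool) (σ : Strategy V) (v : V) (U T : Set V) : Prop :=
  ∀ p : ℕ → V, G.IsPlay p → G.Consistent i σ p → p 0 = v →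
    ∃ n, p n ∈ T ∧ ∀ j < n, p j ∈ U

/-- `v ⇒_{i,U} T`: player `i` has a memoryless strategy forcing every
consistent play from `v` to reach `T` while staying in `U` beforehand. -/
def Forces (i : Bool) (v : V) (U T : Set V) : Prop :=
  ∃ σ : Strategy V, G.ValidStrategy i σ ∧ Memoryless σ ∧ G.ForcesVia i σ v U T

/-- Every play from `v` consistent with `σ` stays in `U` forever. -/
def DivergesVia (i : Bool) (σ : Strategy V) (v : V) (U : Set V) : Prop :=
  ∀ p : ℕ → V, G.IsPlay p → G.Consistent i σ p → p 0 = v → ∀ n, p n ∈ U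

/-- `v ⇒^ω_{i,U}`: player `i` has a memoryless strategy keeping all
consistent plays from `v` forever inside `U`. -/
def Diverges (i : Bool) (v : V) (U : Set V) : Prop :=
  ∃ σ : Strategy V, G.ValidStrategy i σ ∧ Memoryless σ ∧ G.DivergesVia i σ v U

/-- Priority `k` occurs infinitely often on the play `p`. -/
def InfOften (p : ℕ → V) (k : ℕ) : Prop := ∀ N, ∃ n, N ≤ n ∧ G.prio (p n) = k

/-- Player even wins a play iff the least priority occurring infinitely often
is even. -/
def EvenWinsPlay (p : ℕ → V) : Prop := Even (sInf {k | G.InfOften p k})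

/-- Player `i` wins the play `p`. -/
def WinsPlay (i : Bool) (p : ℕ → V) : Prop := G.EvenWinsPlay p ↔ i = true

/-- `σ` is a winning strategy for player `i` from `v`. -/
def WinningFrom (i : Bool) (σ : Strategy V) (v : V) : Prop :=
  ∀ p : ℕ → V, G.IsPlay p → G.Consistent i σ p → p 0 = v → G.WinsPlay i p

end ParityGame

namespace ParityGame

/-- The `R`-class of `v`. -/
def cls {V : Type u} (R : V → V → Prop) (v : V) : Set V := {x | R v x}

variable {V : Type u} (G : ParityGame V)

/-- Governed stuttering bisimulations. -/
def IsGSB (R : V → V → Prop) : Prop :=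
  Equivalence R ∧ ∀ v w, R v w →
    G.prio v = G.prio w ∧
    (∀ u, ¬ R v u → (∃ v', G.edge v v' ∧ R u v') →
      G.Forces (G.owner v) w (cls R w) (cls R u)) ∧
    (∀ i : Bool, G.Diverges i v (cls R v) → G.Diverges i w (cls R w))

end ParityGame

/-!
Player `i` plays from `w` while tracking a run of the winning strategy `σ` from `v` whose current
vertex is bisimilar to the current vertex of the play. A new action is chosen only when the play
changes class, so three cases for the current class `C` have to be distinguished.

* Some exit of `C` owned by `i` leads to a class that a continuation of the tracked run can reach
  through `C`. By the transfer condition `i` can force every play in `C` into that class.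
* Otherwise, the opponent owns an exit of `C`. Two opposing exits would have to lead to the same
  class, since each player can force reaching the class behind their own exit; so the opponent
  owns all of them. Player `i` forces leaving `C` if possible, and then the opponent can make the
  `σ`-run follow; if leaving cannot be forced, some `σ`-run stays in `C` as well.
* Otherwise, no continuation of the run leaves `C`, so the opponent cannot force leaving `C` at the
  current vertex of the run, hence, by divergence transfer, nowhere in `C`: player `i` can keep the
  play in `C`.

The tracked part of the run either grows forever, and its pointwise limit is a run of `σ` passing
through the same classes as the play, or is eventually constant, and then both the play and some
run of `σ` remain in one class. Either way the same priorities recur.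

Both transfer conditions become statements about attractors. These are least fixed points, whose
ordinal stages serve as ranks that decrease along plays.
-/

open Filter OrdinalApprox Order

theorem exists_rank_lfp {α : Type u} (f : Set α →o Set α) :
    ∃ r : α → Ordinal.{u}, ∀ x ∈ f.lfp, x ∈ f {y | y ∈ f.lfp ∧ r y < r x} := by
  obtain ⟨c, hc⟩ := lfp_mem_range_lfpApprox f
  have stage_subset (a : Ordinal.{u}) : lfpApprox f ⊥ a ⊆ f.lfp :=
    lfpApprox_le_of_mem_fixedPoints f f.map_lfp bot_le a
  let r (x : α) : Ordinal.{u} := sInf {a | x ∈ lfpApprox f ⊥ a}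
  have rank_le {a : Ordinal.{u}} {x : α} (hx : x ∈ lfpApprox f ⊥ a) : r x ≤ a :=
    csInf_le' (s := {a | x ∈ lfpApprox f ⊥ a}) hx
  refine ⟨r, fun x hx => ?_⟩
  have hstage : x ∈ lfpApprox f ⊥ (r x) :=
    csInf_mem (s := {a | x ∈ lfpApprox f ⊥ a}) ⟨c, hc.ge hx⟩
  rw [lfpApprox] at hstage
  simp only [Set.bot_eq_empty, Set.sup_eq_union, Set.empty_union, Set.iSup_eq_iUnion,
    Set.mem_iUnion] at hstage
  obtain ⟨b, hb, hxb⟩ := hstage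
  have hsub : lfpApprox f ⊥ b ⊆ {y | y ∈ f.lfp ∧ r y < r x} :=
    fun y hy => ⟨stage_subset b hy, (rank_le hy).trans_lt hb⟩
  exact f.mono hsub hxb

theorem exists_pointwise_limit {α : Type*} {q : ℕ → ℕ → α} {ℓ : ℕ → ℕ} (hmono : Monotone ℓ)
    (hℓ : Tendsto ℓ atTop atTop) (hagree : ∀ n, ∀ k ≤ ℓ n, q (n + 1) k = q n k) :
    ∃ Q : ℕ → α, ∀ n, ∀ k ≤ ℓ n, Q k = q n k := by
  have agree_of_le (n n' : ℕ) (hn : n ≤ n') : ∀ k ≤ ℓ n, q n' k = q n k := by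
    induction n', hn using Nat.le_induction with
    | base => exact fun _ _ => rfl
    | succ n' hn ih => exact fun k hk => (hagree n' k (hk.trans (hmono hn))).trans (ih k hk)
  choose g hg using fun k => (hℓ.eventually_ge_atTop k).exists
  refine ⟨fun k => q (g k) k, fun n k hk => ?_⟩
  rcases le_total n (g k) with h | h
  · exact agree_of_le n (g k) h k hk
  · exact (agree_of_le (g k) n h k (hg k)).symm

namespace ParityGame

variable {V : Type u} {G : ParityGame V} {i : Bool} {U T : Set V} {σ : Strategy V}

section Attractor

variable (G)

/-- One move of the game in which player `i` chooses successors by `f`. -/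
def Step (i : Bool) (f : V → V) (x y : V) : Prop :=
  G.edge x y ∧ (G.owner x = i → y = f x)

/-- The controllable predecessor: the vertices from which player `i` can force the next vertex to
lie in `S`. -/
def cpre (i : Bool) (S : Set V) : Set V :=
  {x | ∃ z, G.edge x z ∧ ∀ y, G.Step i (fun _ => z) x y → y ∈ S}

theorem cpre_mono : Monotone (G.cpre i) :=
  fun _ _ hST _ ⟨z, hz, h⟩ => ⟨z, hz, fun y hy => hST (h y hy)⟩

theorem compl_cpre (i : Bool) (S : Set V) : (G.cpre i S)ᶜ = G.cpre (!i) Sᶜ := by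
  ext x
  constructor
  · intro hx
    by_cases ho : G.owner x = i
    · obtain ⟨z, hz⟩ := G.total x
      exact ⟨z, hz, fun y hy hyS => hx ⟨y, hy.1, fun y' hy' => hy'.2 ho ▸ hyS⟩⟩
    · obtain ⟨y, hy, hyS⟩ : ∃ y, G.edge x y ∧ y ∉ S := by
        by_contra! hall
        obtain ⟨z, hz⟩ := G.total x
        exact hx ⟨z, hz, fun y hy => hall y hy.1⟩
      exact ⟨y, hy, fun y' hy' => hy'.2 (Bool.eq_not.2 ho) ▸ hyS⟩
  · rintro ⟨y, hy, hyS⟩ ⟨z, hz, hzS⟩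
    by_cases ho : G.owner x = i
    · exact hyS z ⟨hz, fun ho' => absurd ho (Bool.eq_not.1 ho')⟩ (hzS z ⟨hz, fun _ => rfl⟩)
    · exact hyS y ⟨hy, fun _ => rfl⟩ (hzS y ⟨hy, fun ho' => absurd ho' ho⟩)

/-- The monotone operator on sets whose least fixed point is the attractor. -/
def attractorStep (i : Bool) (U T : Set V) : Set V →o Set V where
  toFun S := T ∪ U ∩ G.cpre i S
  monotone' _ _ h :=
    Set.union_subset_union_right T (Set.inter_subset_inter_right U (G.cpre_mono h))

/-- The attractor of player `i` to `T` through `U`, as a least fixed point: it consists of the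
vertices from which `i` can force reaching `T` while visiting only vertices of `U` before. -/
def attractor (i : Bool) (U T : Set V) : Set V :=
  (G.attractorStep i U T).lfp

variable {G}

theorem attractor_eq : G.attractor i U T = T ∪ U ∩ G.cpre i (G.attractor i U T) :=
  (OrderHom.map_lfp _).symm

theorem subset_attractor : T ⊆ G.attractor i U T := by
  rw [attractor_eq]
  exact Set.subset_union_left

theorem mem_or_mem_of_mem_attractor {x : V} (hx : x ∈ G.attractor i U T) : x ∈ T ∨ x ∈ U := by
  rw [attractor_eq] at hx
  exact hx.imp_right And.left

theorem disjoint_attractor_attractor_not {T' : Set V} (hUT : Disjoint U T) (hUT' : Disjoint U T')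
    (hTT' : Disjoint T T') : Disjoint (G.attractor i U T) (G.attractor (!i) U T') := by
  suffices h : G.attractor (!i) U T' ⊆ (G.attractor i U T)ᶜ from
    (Set.disjoint_left.2 fun _ hx' hx => h hx' hx).symm
  refine OrderHom.lfp_le _ ?_
  rintro x (hxT' | ⟨hxU, hx⟩) hxA
  · rcases mem_or_mem_of_mem_attractor hxA with hxT | hxU
    · exact Set.disjoint_left.1 hTT' hxT hxT'
    · exact Set.disjoint_left.1 hUT' hxU hxT'
  · rw [← compl_cpre] at hx
    rw [attractor_eq] at hxA
    exact hxA.elim (Set.disjoint_left.1 hUT hxU) fun h => hx h.2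

variable (G) in
theorem exists_decreasing_strategy (i : Bool) (U T : Set V) :
    ∃ (f : V → V) (r : V → Ordinal.{u}), (∀ x, G.edge x (f x)) ∧
      ∀ x ∈ G.attractor i U T, x ∉ T → ∀ y, G.Step i f x y →
        y ∈ G.attractor i U T ∧ r y < r x := by
  obtain ⟨r, hr⟩ := exists_rank_lfp (G.attractorStep i U T)
  have hmove (x : V) : ∃ z, G.edge x z ∧ (x ∈ G.attractor i U T → x ∉ T →
      ∀ y, G.Step i (fun _ => z) x y → y ∈ G.attractor i U T ∧ r y < r x) := by
    by_cases hx : x ∈ G.attractor i U T ∧ x ∉ T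
    · obtain ⟨-, z, hz, hstep⟩ := (hr x hx.1).resolve_left hx.2
      exact ⟨z, hz, fun _ _ => hstep⟩
    · obtain ⟨z, hz⟩ := G.total x
      exact ⟨z, hz, fun hxA hxT => absurd ⟨hxA, hxT⟩ hx⟩
  choose f hf hdec using hmove
  exact ⟨f, r, hf, hdec⟩

variable (G) in
theorem exists_attractor_strategy (i : Bool) (U T : Set V) :
    ∃ f : V → V, (∀ x, G.edge x (f x)) ∧
      (∀ x ∈ G.attractor i U T, x ∉ T → ∀ y, G.Step i f x y → y ∈ G.attractor i U T) ∧
      ∀ p : ℕ → V, (∀ n, G.Step i f (p n) (p (n + 1))) → p 0 ∈ G.attractor i U T →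
        ∃ n, p n ∈ T ∧ ∀ k < n, p k ∈ U := by
  classical
  obtain ⟨f, r, hf, hdec⟩ := G.exists_decreasing_strategy i U T
  refine ⟨f, hf, fun x hx hxT y hy => (hdec x hx hxT y hy).1, fun p hp h0 => ?_⟩
  have mem_attractor (n : ℕ) (hn : ∀ k < n, p k ∉ T) : p n ∈ G.attractor i U T := by
    induction n with
    | zero => exact h0
    | succ n ih =>
      exact (hdec _ (ih fun k hk => hn k (hk.trans n.lt_succ_self)) (hn n n.lt_succ_self) _
        (hp n)).1
  have reach : ∃ n, p n ∈ T := by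
    by_contra! hT
    exact not_strictAnti_of_wellFoundedLT (r ∘ p) (strictAnti_nat_of_succ_lt fun n =>
      (hdec _ (mem_attractor n fun k _ => hT k) (hT n) _ (hp n)).2)
  have before {k : ℕ} (hk : k < Nat.find reach) : p k ∉ T := Nat.find_min reach hk
  exact ⟨Nat.find reach, Nat.find_spec reach, fun k hk =>
    (mem_or_mem_of_mem_attractor (mem_attractor k fun j hj => before (hj.trans hk))).resolve_left
      (before hk)⟩

variable (G) in
theorem exists_trap_strategy (i : Bool) (U T : Set V) :
    ∃ f : V → V, (∀ x, G.edge x (f x)) ∧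
      ∀ x ∈ U, x ∉ G.attractor i U T → ∀ y, G.Step (!i) f x y → y ∉ G.attractor i U T := by
  have hmove (x : V) : ∃ z, G.edge x z ∧ (x ∈ U → x ∉ G.attractor i U T →
      ∀ y, G.Step (!i) (fun _ => z) x y → y ∉ G.attractor i U T) := by
    by_cases hx : x ∈ G.cpre i (G.attractor i U T)
    · obtain ⟨z, hz⟩ := G.total x
      refine ⟨z, hz, fun hxU hxA => absurd ?_ hxA⟩
      rw [attractor_eq]
      exact Or.inr ⟨hxU, hx⟩
    · rw [← Set.mem_compl_iff, compl_cpre] at hx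
      obtain ⟨z, hz, hstep⟩ := hx
      exact ⟨z, hz, fun _ _ => hstep⟩
  choose f hf htrap using hmove
  exact ⟨f, hf, htrap⟩

theorem compl_attractor_compl_subset : (G.attractor i U Uᶜ)ᶜ ⊆ U :=
  Set.compl_subset_comm.1 subset_attractor

variable (G) in
theorem exists_safety_strategy (i : Bool) (U : Set V) :
    ∃ f : V → V, (∀ x, G.edge x (f x)) ∧
      ∀ x ∉ G.attractor i U Uᶜ, ∀ y, G.Step (!i) f x y → y ∉ G.attractor i U Uᶜ := by
  obtain ⟨f, hf, htrap⟩ := G.exists_trap_strategy i U Uᶜ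
  exact ⟨f, hf, fun x hx => htrap x (compl_attractor_compl_subset hx) hx⟩

end Attractor

section Runs

theorem hist_succ (p : ℕ → V) (n : ℕ) : hist p (n + 1) = hist p n ++ [p n] :=
  List.ofFn_succ_last

theorem length_hist (p : ℕ → V) (n : ℕ) : (hist p n).length = n :=
  List.length_ofFn

theorem hist_congr {p q : ℕ → V} {n : ℕ} (h : ∀ k < n, p k = q k) : hist p n = hist q n :=
  congrArg List.ofFn (funext fun k => h k k.2)

theorem exists_trajectory (s : Strategy V) (v : V) :
    ∃ p : ℕ → V, p 0 = v ∧ ∀ n, p (n + 1) = s (hist p n) (p n) := by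
  let state (n : ℕ) : List V × V := n.rec ([], v) fun _ a => (a.1 ++ [a.2], s a.1 a.2)
  have hist_state (n : ℕ) : hist (fun k => (state k).2) n = (state n).1 := by
    induction n with
    | zero => rfl
    | succ n ih => rw [hist_succ, ih]
  exact ⟨fun n => (state n).2, rfl, fun n => by rw [hist_state]⟩

variable (G) in
/-- A play consistent with the strategy `σ` of player `i`. -/
def IsRun (i : Bool) (σ : Strategy V) (p : ℕ → V) : Prop :=
  ∀ n, G.Step i (σ (hist p n)) (p n) (p (n + 1))

theorem isRun_iff {p : ℕ → V} : G.IsRun i σ p ↔ G.IsPlay p ∧ G.Consistent i σ p :=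
  forall_and

theorem isRun_of_forall_exists_agree {Q : ℕ → V}
    (h : ∀ m, ∃ q, G.IsRun i σ q ∧ ∀ k ≤ m, Q k = q k) : G.IsRun i σ Q := by
  intro n
  obtain ⟨q, hq, hQq⟩ := h (n + 1)
  rw [hQq n n.le_succ, hQq (n + 1) le_rfl,
    hist_congr fun k hk => hQq k (hk.le.trans n.le_succ)]
  exact hq n

theorem exists_isRun_extending (hσ : G.ValidStrategy i σ) {f : V → V}
    (hf : ∀ x, G.edge x (f x)) {q : ℕ → V} {m : ℕ}
    (hq : ∀ k < m, G.Step i (σ (hist q k)) (q k) (q (k + 1))) :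
    ∃ q', G.IsRun i σ q' ∧ (∀ k ≤ m, q' k = q k) ∧
      ∀ n ≥ m, G.Step (!i) f (q' n) (q' (n + 1)) := by
  classical
  obtain ⟨p, hp0, hp⟩ := exists_trajectory (fun h x =>
    if h.length < m then q (h.length + 1) else if G.owner x = i then σ h x else f x) (q 0)
  simp only [length_hist] at hp
  have agree (k : ℕ) (hk : k ≤ m) : p k = q k := by
    cases k with
    | zero => exact hp0
    | succ k => rw [hp, if_pos (Nat.lt_of_succ_le hk)]
  have next {n : ℕ} (hn : m ≤ n) :
      p (n + 1) = if G.owner (p n) = i then σ (hist p n) (p n) else f (p n) := by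
    rw [hp, if_neg hn.not_gt]
  have edge {n : ℕ} (hn : m ≤ n) : G.edge (p n) (p (n + 1)) := by
    rw [next hn]
    split_ifs with ho
    · exact hσ _ _ ho
    · exact hf _
  refine ⟨p, fun n => ?_, agree, fun n hn => ⟨edge hn, fun ho => ?_⟩⟩
  · rcases lt_or_ge n m with hn | hn
    · rw [agree n hn.le, agree (n + 1) hn, hist_congr fun k hk => agree k (hk.trans hn).le]
      exact hq n hn
    · exact ⟨edge hn, fun ho => by rw [next hn, if_pos ho]⟩
  · rw [next hn, if_neg (Bool.eq_not.1 ho)]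

theorem exists_isRun_against (hσ : G.ValidStrategy i σ) {f : V → V}
    (hf : ∀ x, G.edge x (f x)) (v : V) :
    ∃ q, G.IsRun i σ q ∧ q 0 = v ∧ ∀ n, G.Step (!i) f (q n) (q (n + 1)) := by
  obtain ⟨q, hq, h0, hstep⟩ := exists_isRun_extending hσ hf (q := fun _ => v) (m := 0) nofun
  exact ⟨q, hq, h0 0 le_rfl, fun n => hstep n n.zero_le⟩

theorem exists_isRun (hσ : G.ValidStrategy i σ) (v : V) : ∃ q, G.IsRun i σ q ∧ q 0 = v := by
  choose f hf using G.total
  obtain ⟨q, hq, h0, -⟩ := exists_isRun_against hσ hf v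
  exact ⟨q, hq, h0⟩

variable (G) in
/-- The position `q m` of a `σ`-run `q` can be continued by a `σ`-run that reaches `T`, visiting
only vertices of `U` in between. -/
def CanReach (i : Bool) (σ : Strategy V) (q : ℕ → V) (m : ℕ) (U T : Set V) : Prop :=
  ∃ q', G.IsRun i σ q' ∧ (∀ k ≤ m, q' k = q k) ∧
    ∃ m' ≥ m, q' m' ∈ T ∧ ∀ k, m ≤ k → k < m' → q' k ∈ U

variable (G) in
/-- The position `q m` of a `σ`-run `q` can be continued by a `σ`-run that never leaves `U`. -/
def CanStay (i : Bool) (σ : Strategy V) (q : ℕ → V) (m : ℕ) (U : Set V) : Prop :=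
  ∃ q', G.IsRun i σ q' ∧ (∀ k ≤ m, q' k = q k) ∧ ∀ n ≥ m, q' n ∈ U

theorem canReach_of_mem_attractor (hσ : G.ValidStrategy i σ) {q : ℕ → V} (hq : G.IsRun i σ q)
    {m : ℕ} (hm : q m ∈ G.attractor (!i) U T) : G.CanReach i σ q m U T := by
  obtain ⟨f, hf, -, hreach⟩ := G.exists_attractor_strategy (!i) U T
  obtain ⟨q', hq', hagree, hstep⟩ := exists_isRun_extending hσ hf fun k (_ : k < m) => hq k
  obtain ⟨n, hn, hbefore⟩ := hreach (fun k => q' (m + k)) (fun k => hstep (m + k) (by omega))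
    (by rwa [Nat.add_zero, hagree m le_rfl])
  refine ⟨q', hq', hagree, m + n, by omega, hn, fun k hmk hk => ?_⟩
  obtain ⟨j, rfl⟩ := Nat.exists_eq_add_of_le hmk
  exact hbefore j (by omega)

theorem canStay_of_notMem_attractor (hσ : G.ValidStrategy i σ) {q : ℕ → V} (hq : G.IsRun i σ q)
    {m : ℕ} (hm : q m ∉ G.attractor i U Uᶜ) : G.CanStay i σ q m U := by
  obtain ⟨f, hf, hsafe⟩ := G.exists_safety_strategy i U
  obtain ⟨q', hq', hagree, hstep⟩ := exists_isRun_extending hσ hf fun k (_ : k < m) => hq k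
  refine ⟨q', hq', hagree, fun n hn => compl_attractor_compl_subset (G := G) (i := i) ?_⟩
  induction n, hn using Nat.le_induction with
  | base => rwa [hagree m le_rfl]
  | succ n hn ih => exact hsafe _ ih _ (hstep n hn)

theorem Forces.mem_attractor {x : V} (h : G.Forces i x U T) : x ∈ G.attractor i U T := by
  obtain ⟨σ, hσ, -, hforce⟩ := h
  obtain ⟨f, hf, htrap⟩ := G.exists_trap_strategy i U T
  obtain ⟨p, hp, hp0, hstep⟩ := exists_isRun_against hσ hf x
  obtain ⟨n, hnT, hbefore⟩ := hforce p (isRun_iff.1 hp).1 (isRun_iff.1 hp).2 hp0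
  by_contra hx
  have evade (k : ℕ) (hk : k ≤ n) : p k ∉ G.attractor i U T := by
    induction k with
    | zero => rwa [hp0]
    | succ k ih => exact htrap _ (hbefore k hk) (ih (Nat.le_of_succ_le hk)) _ (hstep k)
  exact evade n le_rfl (subset_attractor hnT)

theorem diverges_iff_notMem_attractor {x : V} :
    G.Diverges i x U ↔ x ∉ G.attractor (!i) U Uᶜ := by
  constructor
  · rintro ⟨σ, hσ, -, hdiv⟩ hx
    obtain ⟨f, hf, -, hreach⟩ := G.exists_attractor_strategy (!i) U Uᶜ
    obtain ⟨p, hp, hp0, hstep⟩ := exists_isRun_against hσ hf x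
    obtain ⟨n, hn, -⟩ := hreach p hstep (hp0 ▸ hx)
    exact hn (hdiv p (isRun_iff.1 hp).1 (isRun_iff.1 hp).2 hp0 n)
  · intro hx
    obtain ⟨f, hf, hsafe⟩ := G.exists_safety_strategy (!i) U
    rw [Bool.not_not] at hsafe
    refine ⟨fun _ => f, fun _ x _ => hf x, fun _ _ _ => rfl, fun p hp hc hp0 n =>
      compl_attractor_compl_subset (G := G) (i := !i) ?_⟩
    induction n with
    | zero => rwa [hp0]
    | succ n ih => exact hsafe _ ih _ ⟨hp n, hc n⟩

end Runs

section LocalSimulation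

variable {R : V → V → Prop} {q : ℕ → V} {m : ℕ}

theorem cls_eq_of_rel (hR : Equivalence R) {a b : V} (h : R a b) : cls R a = cls R b :=
  Set.ext fun _ => ⟨hR.trans (hR.symm h), hR.trans h⟩

theorem disjoint_cls_of_not_rel (hR : Equivalence R) {a b : V} (h : ¬ R a b) :
    Disjoint (cls R a) (cls R b) :=
  Set.disjoint_left.2 fun _ hax hbx => h (hR.trans hax (hR.symm hbx))

theorem IsGSB.prio_eq (hG : G.IsGSB R) {x y : V} (h : R x y) : G.prio x = G.prio y :=
  (hG.2 x y h).1

theorem IsGSB.cls_subset_attractor (hG : G.IsGSB R) {u x y : V} (hx : x ∈ cls R u)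
    (he : G.edge x y) (hy : y ∉ cls R u) :
    cls R u ⊆ G.attractor (G.owner x) (cls R u) (cls R y) := by
  intro z hz
  rw [cls_eq_of_rel hG.1 hx] at hy hz
  have hforce := (hG.2 x z hz).2.1 y hy ⟨y, he, hG.1.refl y⟩
  rw [← cls_eq_of_rel hG.1 hz, ← cls_eq_of_rel hG.1 hx] at hforce
  exact hforce.mem_attractor

theorem IsGSB.cls_subset_attractor_compl (hG : G.IsGSB R) {u : V}
    (hu : u ∈ G.attractor i (cls R u) (cls R u)ᶜ) :
    cls R u ⊆ G.attractor i (cls R u) (cls R u)ᶜ := by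
  intro x hx
  by_contra hxA
  have hdiv : G.Diverges (!i) x (cls R x) := by
    rwa [← cls_eq_of_rel hG.1 hx, diverges_iff_notMem_attractor, Bool.not_not]
  have hdiv' := (hG.2 x u (hG.1.symm hx)).2.2 (!i) hdiv
  rw [diverges_iff_notMem_attractor, Bool.not_not] at hdiv'
  exact hdiv' hu

theorem IsGSB.rel_of_opposing_exits (hG : G.IsGSB R) {u x y x' y' : V}
    (hx : x ∈ cls R u) (he : G.edge x y) (hy : y ∉ cls R u) (hx' : x' ∈ cls R u)
    (he' : G.edge x' y') (hy' : y' ∉ cls R u) (ho : G.owner x' = !G.owner x) : R y y' := by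
  by_contra h
  have hdisj := disjoint_attractor_attractor_not (G := G) (i := G.owner x)
    (disjoint_cls_of_not_rel hG.1 hy) (disjoint_cls_of_not_rel hG.1 hy')
    (disjoint_cls_of_not_rel hG.1 h)
  refine Set.disjoint_left.1 hdisj (hG.cls_subset_attractor hx he hy hx) ?_
  rw [← ho]
  exact hG.cls_subset_attractor hx' he' hy' hx

theorem IsGSB.canReach_of_opponent_exit (hG : G.IsGSB R) (hσ : G.ValidStrategy i σ)
    (hq : G.IsRun i σ q) {x y : V} (hx : x ∈ cls R (q m)) (ho : G.owner x = !i)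
    (he : G.edge x y) (hy : y ∉ cls R (q m)) :
    G.CanReach i σ q m (cls R (q m)) (cls R y) :=
  canReach_of_mem_attractor hσ hq (ho ▸ hG.cls_subset_attractor hx he hy (hG.1.refl _))

variable (G) in
/-- Playing `f` inside the class of `q m` can be simulated by the `σ`-runs continuing `q` from
position `m`: each exit leads to a class that such a run can reach, and if some play can remain in
the class forever then so can such a run. -/
structure SimulatedAt (R : V → V → Prop) (i : Bool) (σ : Strategy V) (q : ℕ → V) (m : ℕ)
    (f : V → V) : Prop where
  edge : ∀ x, G.edge x (f x)
  exit : ∀ x ∈ cls R (q m), ∀ y ∉ cls R (q m), G.Step i f x y →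
    G.CanReach i σ q m (cls R (q m)) (cls R y)
  stay : ∀ p : ℕ → V, (∀ n, G.Step i f (p n) (p (n + 1))) → (∀ n, p n ∈ cls R (q m)) →
    G.CanStay i σ q m (cls R (q m))

theorem IsGSB.exists_simulatedAt_of_own_exit (hG : G.IsGSB R) {x y : V}
    (hx : x ∈ cls R (q m)) (ho : G.owner x = i) (he : G.edge x y) (hy : y ∉ cls R (q m))
    (hreach : G.CanReach i σ q m (cls R (q m)) (cls R y)) :
    ∃ f, G.SimulatedAt R i σ q m f := by
  have hsub := hG.cls_subset_attractor hx he hy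
  rw [ho] at hsub
  have hdisj := disjoint_cls_of_not_rel hG.1 hy
  obtain ⟨f, hf, hclosed, hwin⟩ := G.exists_attractor_strategy i (cls R (q m)) (cls R y)
  refine ⟨f, hf, fun x' hx' y' hy' hstep => ?_, fun p hp hstay => ?_⟩
  · have hyy' : R y y' := (mem_or_mem_of_mem_attractor
      (hclosed x' (hsub hx') (Set.disjoint_left.1 hdisj hx') y' hstep)).resolve_right hy'
    rwa [← cls_eq_of_rel hG.1 hyy']
  · obtain ⟨n, hn, -⟩ := hwin p hp (hsub (hstay 0))
    exact (Set.disjoint_left.1 hdisj (hstay n) hn).elim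

theorem IsGSB.exists_simulatedAt_of_opponent_exits (hG : G.IsGSB R) (hσ : G.ValidStrategy i σ)
    (hq : G.IsRun i σ q)
    (hexits : ∀ x ∈ cls R (q m), ∀ y ∉ cls R (q m), G.edge x y → G.owner x = !i) :
    ∃ f, G.SimulatedAt R i σ q m f := by
  obtain ⟨f, hf, -, hwin⟩ := G.exists_attractor_strategy i (cls R (q m)) (cls R (q m))ᶜ
  refine ⟨f, hf, fun x hx y hy hstep => hG.canReach_of_opponent_exit hσ hq hx
    (hexits x hx y hy hstep.1) hstep.1 hy, fun p hp hstay => ?_⟩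
  by_cases hu : q m ∈ G.attractor i (cls R (q m)) (cls R (q m))ᶜ
  · obtain ⟨n, hn, -⟩ := hwin p hp (hG.cls_subset_attractor_compl hu (hstay 0))
    exact absurd (hstay n) hn
  · exact canStay_of_notMem_attractor hσ hq hu

theorem IsGSB.exists_simulatedAt_of_trapped (hG : G.IsGSB R) (hσ : G.ValidStrategy i σ)
    (hq : G.IsRun i σ q)
    (htrapped : ∀ q', G.IsRun i σ q' → (∀ k ≤ m, q' k = q k) → ∀ n ≥ m, q' n ∈ cls R (q m)) :
    ∃ f, G.SimulatedAt R i σ q m f := by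
  have hu : q m ∉ G.attractor (!i) (cls R (q m)) (cls R (q m))ᶜ := fun hu => by
    obtain ⟨q', hq', hagree, n, hn, hleft, -⟩ := canReach_of_mem_attractor hσ hq hu
    exact hleft (htrapped q' hq' hagree n hn)
  have hsafe {x : V} (hx : x ∈ cls R (q m)) :
      x ∉ G.attractor (!i) (cls R (q m)) (cls R (q m))ᶜ := fun hxA => by
    rw [cls_eq_of_rel hG.1 hx] at hu hxA
    exact hu (hG.cls_subset_attractor_compl hxA (hG.1.symm hx))
  obtain ⟨f, hf, hkeep⟩ := G.exists_safety_strategy (!i) (cls R (q m))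
  rw [Bool.not_not] at hkeep
  exact ⟨f, hf, fun x hx y hy hstep =>
      absurd (compl_attractor_compl_subset (hkeep x (hsafe hx) y hstep)) hy,
    fun _ _ _ => ⟨q, hq, fun _ _ => rfl, htrapped q hq fun _ _ => rfl⟩⟩

theorem IsGSB.exists_simulatedAt (hG : G.IsGSB R) (hσ : G.ValidStrategy i σ)
    (hq : G.IsRun i σ q) (m : ℕ) : ∃ f, G.SimulatedAt R i σ q m f := by
  by_cases hown : ∃ x ∈ cls R (q m), ∃ y ∉ cls R (q m), G.edge x y ∧ G.owner x = i ∧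
      G.CanReach i σ q m (cls R (q m)) (cls R y)
  · obtain ⟨x, hx, y, hy, he, ho, hreach⟩ := hown
    exact hG.exists_simulatedAt_of_own_exit hx ho he hy hreach
  by_cases hopp : ∃ x ∈ cls R (q m), ∃ y ∉ cls R (q m), G.edge x y ∧ G.owner x = !i
  · obtain ⟨x, hx, y, hy, he, ho⟩ := hopp
    refine hG.exists_simulatedAt_of_opponent_exits hσ hq fun x' hx' y' hy' he' =>
      Bool.eq_not.2 fun ho' => hown ⟨x', hx', y', hy', he', ho', ?_⟩
    have hyy' : R y y' :=
      hG.rel_of_opposing_exits hx he hy hx' he' hy' (by rw [ho, ho', Bool.not_not])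
    exact cls_eq_of_rel hG.1 hyy' ▸ hG.canReach_of_opponent_exit hσ hq hx ho he hy
  · refine hG.exists_simulatedAt_of_trapped hσ hq fun q' hq' hagree n hn => ?_
    induction n using Nat.strong_induction_on with | _ n ih
    obtain rfl | hmn := hn.eq_or_lt
    · exact hagree m le_rfl ▸ hG.1.refl _
    obtain ⟨n, rfl⟩ := Nat.exists_eq_add_one_of_ne_zero (Nat.ne_zero_of_lt hmn)
    by_contra hleft
    have hmem := ih n n.lt_succ_self (Nat.le_of_lt_succ hmn)
    by_cases ho : G.owner (q' n) = i
    · exact hown ⟨q' n, hmem, q' (n + 1), hleft, (hq' n).1, ho, q', hq', hagree, n + 1, hn,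
        hG.1.refl _, fun k hmk hk => ih k hk hmk⟩
    · exact hopp ⟨q' n, hmem, q' (n + 1), hleft, (hq' n).1, Bool.eq_not.2 ho⟩

end LocalSimulation

section Matching

theorem exists_strategy_of_simulation {S : Type*} {pos : S → V} {act : S → V → V}
    {Next : S → S → Prop} (hact : ∀ s x, G.edge x (act s x))
    (hnext : ∀ s y, G.Step i (act s) (pos s) y → ∃ s', pos s' = y ∧ Next s s') (s₀ : S) :
    ∃ ψ, G.ValidStrategy i ψ ∧ ∀ p, G.IsRun i ψ p → p 0 = pos s₀ →
      ∃ s : ℕ → S, s 0 = s₀ ∧ ∀ n, pos (s n) = p n ∧ Next (s n) (s (n + 1)) ∧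
        G.Step i (act (s n)) (p n) (p (n + 1)) := by
  have : Nonempty S := ⟨s₀⟩
  choose! upd hpos hupd using hnext
  let state (h : List V) : S := h.tail.foldl upd s₀
  refine ⟨fun h x => act (state (h ++ [x])) x, fun _ _ _ => hact _ _, fun p hp hp0 => ?_⟩
  let s (n : ℕ) : S := state (hist p (n + 1))
  have s_succ (n : ℕ) : s (n + 1) = upd (s n) (p (n + 1)) := by
    have hne : hist p (n + 1) ≠ [] := by simp [hist_succ]
    simp only [s, state]
    rw [hist_succ p (n + 1), List.tail_append_of_ne_nil hne, List.foldl_append,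
      List.foldl_cons, List.foldl_nil]
  have step (n : ℕ) : G.Step i (act (s n)) (p n) (p (n + 1)) := by
    simp only [s, hist_succ p n]
    exact hp n
  have pos_eq (n : ℕ) : pos (s n) = p n := by
    induction n with
    | zero => exact hp0.symm
    | succ n ih => rw [s_succ, hpos _ _ (ih ▸ step n)]
  exact ⟨s, rfl, fun n => ⟨pos_eq n, s_succ n ▸ hupd _ _ (pos_eq n ▸ step n), step n⟩⟩

variable {p q : ℕ → V}

theorem infOften_iff_of_tendsto {ℓ : ℕ → ℕ} (hℓ : Tendsto ℓ atTop atTop)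
    (hend : ∀ n, G.prio (q (ℓ n)) = G.prio (p n))
    (hblock : ∀ n k, ℓ n ≤ k → k < ℓ (n + 1) → G.prio (q k) = G.prio (p n)) (c : ℕ) :
    G.InfOften p c ↔ G.InfOften q c := by
  constructor
  · intro h N
    obtain ⟨n₀, hn₀⟩ := eventually_atTop.1 (hℓ.eventually_ge_atTop N)
    obtain ⟨n, hn, hc⟩ := h n₀
    exact ⟨ℓ n, hn₀ n hn, (hend n).trans hc⟩
  · intro h N
    obtain ⟨k, hk, hc⟩ := h (ℓ N)
    obtain ⟨n, hkn, hn⟩ := ((hℓ.eventually_gt_atTop k).and (eventually_ge_atTop N)).exists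
    obtain ⟨j, hj, hj'⟩ : ∃ j, ¬ k < ℓ (N + j) ∧ k < ℓ (N + j + 1) :=
      Nat.exists_not_and_succ_of_not_zero_of_exists (p := fun j => k < ℓ (N + j)) hk.not_gt
        ⟨n - N, by rwa [Nat.add_sub_cancel' hn]⟩
    exact ⟨N + j, Nat.le_add_right N j, (hblock _ k (not_lt.1 hj) hj').symm.trans hc⟩

theorem infOften_iff_of_prio_eq {N a : ℕ} (h : ∀ n ≥ N, G.prio (p n) = a) (c : ℕ) :
    G.InfOften p c ↔ a = c := by
  constructor
  · intro hc
    obtain ⟨n, hn, hpn⟩ := hc N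
    exact (h n hn).symm.trans hpn
  · rintro rfl M
    exact ⟨max M N, le_max_left M N, h _ (le_max_right M N)⟩

theorem winsPlay_congr (h : ∀ c, G.InfOften p c ↔ G.InfOften q c) :
    G.WinsPlay i p ↔ G.WinsPlay i q := by
  unfold WinsPlay EvenWinsPlay
  simp only [h]

variable (G) in
/-- A state of the simulation of a play by `σ`-runs from `v`: the initial segment of length `len`
of the `σ`-run `run` matches the play up to its current position `pos`. -/
structure RunMatch (R : V → V → Prop) (i : Bool) (σ : Strategy V) (v : V) where
  run : ℕ → V
  len : ℕ
  pos : V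
  isRun : G.IsRun i σ run
  run_zero : run 0 = v
  rel : R (run len) pos

variable {R : V → V → Prop} {v : V}

/-- The state `t` extends the matched initial segment of `s` by vertices of the class in which `s`
ends, apart from the last one; the run may be changed only if the segment grows. -/
structure RunMatch.Extends (s t : G.RunMatch R i σ v) : Prop where
  len_le : s.len ≤ t.len
  agree : ∀ k ≤ s.len, t.run k = s.run k
  rel : ∀ k, s.len ≤ k → k < t.len → R (s.run s.len) (t.run k)
  run_eq : t.len = s.len → t.run = s.run

theorem RunMatch.exists_extends (hR : Equivalence R) (s : G.RunMatch R i σ v) {f : V → V}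
    (hf : G.SimulatedAt R i σ s.run s.len f) {y : V} (hy : G.Step i f s.pos y) :
    ∃ t : G.RunMatch R i σ v, t.pos = y ∧ s.Extends t := by
  by_cases hrel : R (s.run s.len) y
  · exact ⟨⟨s.run, s.len, y, s.isRun, s.run_zero, hrel⟩, rfl, le_rfl, fun _ _ => rfl,
      fun _ hk hk' => absurd hk' hk.not_gt, fun _ => rfl⟩
  · obtain ⟨q, hq, hagree, m, hm, hqm, hbetween⟩ := hf.exit s.pos s.rel y hrel hy
    refine ⟨⟨q, m, y, hq, (hagree 0 (Nat.zero_le _)).trans s.run_zero, hR.symm hqm⟩, rfl, hm,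
      hagree, hbetween, ?_⟩
    rintro rfl
    exact absurd (hR.symm (hagree _ le_rfl ▸ hqm)) hrel

variable {s : ℕ → G.RunMatch R i σ v}

theorem IsGSB.exists_matching_run_of_tendsto (hG : G.IsGSB R)
    (hs : ∀ n, (s n).Extends (s (n + 1))) (hlen : Tendsto (fun n => (s n).len) atTop atTop) :
    ∃ q, G.IsRun i σ q ∧ q 0 = v ∧
      ∀ c, G.InfOften (fun n => (s n).pos) c ↔ G.InfOften q c := by
  obtain ⟨q, hq⟩ := exists_pointwise_limit (q := fun n => (s n).run)
    (monotone_nat_of_le_succ fun n => (hs n).len_le) hlen fun n => (hs n).agree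
  refine ⟨q, isRun_of_forall_exists_agree fun m => ?_,
    (hq 0 0 (Nat.zero_le _)).trans (s 0).run_zero, infOften_iff_of_tendsto hlen ?_ ?_⟩
  · obtain ⟨n, hn⟩ := (hlen.eventually_ge_atTop m).exists
    exact ⟨(s n).run, (s n).isRun, fun k hk => hq n k (hk.trans hn)⟩
  · intro n
    rw [hq n _ le_rfl]
    exact hG.prio_eq (s n).rel
  · intro n k hk hk'
    rw [hq (n + 1) k hk'.le]
    exact hG.prio_eq (hG.1.trans (hG.1.symm ((hs n).rel k hk hk')) (s n).rel)

theorem IsGSB.exists_matching_run_of_constant (hG : G.IsGSB R)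
    {f : (ℕ → V) → ℕ → V → V}
    (hf : ∀ q, G.IsRun i σ q → ∀ m, G.SimulatedAt R i σ q m (f q m))
    (hs : ∀ n, (s n).Extends (s (n + 1)))
    (hstep : ∀ n, G.Step i (f (s n).run (s n).len) (s n).pos (s (n + 1)).pos) {N : ℕ}
    (hlen : ∀ n ≥ N, (s n).len = (s N).len) :
    ∃ q, G.IsRun i σ q ∧ q 0 = v ∧
      ∀ c, G.InfOften (fun n => (s n).pos) c ↔ G.InfOften q c := by
  have hrun (n : ℕ) (hn : n ≥ N) : (s n).run = (s N).run := by
    induction n, hn using Nat.le_induction with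
    | base => rfl
    | succ n hn ih =>
      exact ((hs n).run_eq ((hlen _ (hn.trans n.le_succ)).trans (hlen n hn).symm)).trans ih
  have hstay (n : ℕ) (hn : n ≥ N) : R ((s N).run (s N).len) (s n).pos := by
    simpa only [hrun n hn, hlen n hn] using (s n).rel
  have hstep' (n : ℕ) (hn : n ≥ N) :
      G.Step i (f (s N).run (s N).len) (s n).pos (s (n + 1)).pos := by
    simpa only [hrun n hn, hlen n hn] using hstep n
  obtain ⟨q, hq, hagree, hqstay⟩ := (hf _ (s N).isRun (s N).len).stay (fun n => (s (N + n)).pos)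
    (fun n => hstep' _ (Nat.le_add_right N n)) (fun n => hstay _ (Nat.le_add_right N n))
  refine ⟨q, hq, (hagree 0 (Nat.zero_le _)).trans (s N).run_zero, fun c => ?_⟩
  rw [infOften_iff_of_prio_eq (fun n hn => (hG.prio_eq (hstay n hn)).symm),
    infOften_iff_of_prio_eq (fun n hn => (hG.prio_eq (hqstay n hn)).symm)]

theorem IsGSB.exists_matching_strategy (hG : G.IsGSB R) (hσ : G.ValidStrategy i σ) {w : V}
    (hvw : R v w) :
    ∃ ψ, G.ValidStrategy i ψ ∧ ∀ p, G.IsRun i ψ p → p 0 = w →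
      ∃ q, G.IsRun i σ q ∧ q 0 = v ∧ ∀ c, G.InfOften p c ↔ G.InfOften q c := by
  obtain ⟨q₀, hq₀, rfl⟩ := exists_isRun hσ v
  have : Nonempty V := ⟨w⟩
  choose! f hf using fun q hq m => hG.exists_simulatedAt (q := q) hσ hq m
  obtain ⟨ψ, hψ, hsim⟩ := exists_strategy_of_simulation
    (pos := RunMatch.pos) (act := fun s : G.RunMatch R i σ (q₀ 0) => f s.run s.len)
    (fun s => (hf s.run s.isRun s.len).edge)
    (fun s _ hy => s.exists_extends hG.1 (hf s.run s.isRun s.len) hy)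
    ⟨q₀, 0, w, hq₀, rfl, hvw⟩
  refine ⟨ψ, hψ, fun p hp hp0 => ?_⟩
  obtain ⟨s, -, hs⟩ := hsim p hp hp0
  choose hpos hext hstep using hs
  obtain rfl : (fun n => (s n).pos) = p := funext hpos
  rcases tendsto_atTop_of_monotone (monotone_nat_of_le_succ fun n => (hext n).len_le) with
    hlen | ⟨m, hlen⟩
  · exact hG.exists_matching_run_of_tendsto hext hlen
  · rw [nhds_discrete, tendsto_pure, eventually_atTop] at hlen
    obtain ⟨N, hN⟩ := hlen
    exact hG.exists_matching_run_of_constant hf hext hstep fun n hn =>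
      (hN n hn).trans (hN N le_rfl).symm

end Matching

end ParityGame

open ParityGame in
/-- On an infinite vertex set a play need not have any recurring priority; the junk value
`sInf ∅ = 0` awards such a play to player even. -/
theorem gsb_refines_winner_general {V : Type u} {G : ParityGame V} {R : V → V → Prop}
    (hG : G.IsGSB R) {v w : V} (hvw : R v w) {i : Bool} {σ : Strategy V}
    (hσ : G.ValidStrategy i σ) (hwin : G.WinningFrom i σ v) :
    ∃ ψ : Strategy V, G.ValidStrategy i ψ ∧ G.WinningFrom i ψ w := by
  obtain ⟨ψ, hψ, hmatch⟩ := hG.exists_matching_strategy hσ hvw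
  refine ⟨ψ, hψ, fun p hp hc hp0 => ?_⟩
  obtain ⟨q, hq, hq0, hinf⟩ := hmatch p (isRun_iff.2 ⟨hp, hc⟩) hp0
  exact (winsPlay_congr hinf).2 (hwin q (isRun_iff.1 hq).1 (isRun_iff.1 hq).2 hq0)

/-- Governed stuttering bisimilarity refines winner equivalence: if `v` and
`w` are related by some governed stuttering bisimulation and player `i` has a
winning strategy from `v`, then `i` has a winning strategy from `w`. -/
theorem gsb_refines_winner {V : Type u} [Fintype V] (G : ParityGame V) :
    ∀ v w : V, (∃ R : V → V → Prop, G.IsGSB R ∧ R v w) →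
      ∀ i : Bool,
        (∃ σ : ParityGame.Strategy V, G.ValidStrategy i σ ∧ G.WinningFrom i σ v) →
        ∃ σ : ParityGame.Strategy V, G.ValidStrategy i σ ∧ G.WinningFrom i σ w := by
  rintro v w ⟨R, hG, hvw⟩ i ⟨σ, hσ, hwin⟩
  exact gsb_refines_winner_general hG hvw hσ hwin
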